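/- Let p be a prime. (a) For every n ≥ 1 there exist unique polynomials Ã_{n,i}(u) ∈ ℤ[u], for n ≤ i ≤ pn, such that in ℤ[u][x, z] one has ∏_{j=0}^{n−1} (z^p − u^{pj}·x^p) = Σ_{i=n}^{pn} Ã_{n,i}(u) · x^{pn−i} · ∏_{j=0}^{i−1} (z − u^j·x). (b) For all n ≥ 1 and n ≤ i ≤ pn, the polynomial (n)_{u^p}! · ((p)_u)^n divides (i)_u! · Ã_{n,i}(u) in ℤ[u]; consequently there is a unique B_{n,i}(u) ∈ ℤ[u] with (n)_{u^p}! · ((p)_u)^n · B_{n,i}(u) = (i)_u! · Ã_{n,i}(u). (Integrality of the coefficients of the divided Frobenius.) -/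

import Mathlib

/-!
Both sides are homogeneous of degree `pn` in `x, z`, so nothing is lost by putting `x = 1`. Let
`q = u` and let `∂ f = (f(qz) - f(z)) / ((q - 1) z)` be the `q`-derivative. The twisted powers
`b_m = ∏_{j<m} (z - q^j)` satisfy `∂ b_m = (m)_q b_{m-1}` and `b_m(1) = 0` for `m ≥ 1`, so
the coefficients of `f = ∑ a_i b_i` obey the Taylor formula `(i)_q! a_i = (∂^i f)(1)`, which makes
them unique.

The left-hand side is `F_n(z) = P_n(z^p)`, with `P_n` the `n`-th twisted power for `q^p`. As `b_n`
is monic and divides `F_n`, and divides `b_i` for `i ≥ n`, an expansion of `F_n` with terms `i ≥ n`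
exists. The chain rule gives `∂ F_{n+1} = (p)_q (n+1)_{q^p} z^{p-1} F_n`, and by the Leibniz rule
`∂ (z f) = f + q z ∂ f`, multiplication by `z` preserves divisibility of all the values
`(∂^m f)(1)` by a given `d`. By induction on `n`, every `(∂^m F_n)(1)` is divisible by
`(n)_{q^p}! (p)_q^n`.
-/

/-- The `q`-integer `(n)_q = 1 + q + ⋯ + q^{n-1}`. -/
def qInt {S : Type*} [CommRing S] (q : S) (n : ℕ) : S :=
  ∑ i ∈ Finset.range n, q ^ i

/-- The `q`-factorial `(n)_q! = ∏_{i=1}^n (i)_q`. -/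
def qFact {S : Type*} [CommRing S] (q : S) (n : ℕ) : S :=
  ∏ i ∈ Finset.range n, qInt q (i + 1)

/- We work in `ℤ[u][x,z] = MvPolynomial (Fin 3) ℤ`, with `u` the variable `0`, `x` the
variable `1` and `z` the variable `2`; `ℤ[u]` is mapped in via `u ↦` variable `0`. -/

/-- The property that the family `Ã i`, `n ≤ i ≤ pn`, solves
`∏_{j=0}^{n−1} (z^p − u^{pj}·x^p) = Σ_{i=n}^{pn} Ã_i(u)·x^{pn−i}·∏_{j=0}^{i−1} (z − u^j·x)`
(with `Ã i = 0` outside `[n, pn]`). -/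
def IsAtilde (p n : ℕ) (At : ℕ → Polynomial ℤ) : Prop :=
  (∀ i : ℕ, i ∉ Finset.Icc n (p * n) → At i = 0) ∧
  (∏ j ∈ Finset.range n,
      ((MvPolynomial.X 2 : MvPolynomial (Fin 3) ℤ) ^ p -
        (MvPolynomial.X 0) ^ (p * j) * (MvPolynomial.X 1) ^ p)) =
    ∑ i ∈ Finset.Icc n (p * n),
      Polynomial.aeval (MvPolynomial.X 0 : MvPolynomial (Fin 3) ℤ) (At i) *
        (MvPolynomial.X 1) ^ (p * n - i) *
        ∏ j ∈ Finset.range i,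
          ((MvPolynomial.X 2 : MvPolynomial (Fin 3) ℤ) -
            (MvPolynomial.X 0) ^ j * MvPolynomial.X 1)

open Polynomial Finset

section QInteger

variable {S : Type*} [CommRing S]

lemma qInt_zero (q : S) : qInt q 0 = 0 := rfl

lemma qInt_succ (q : S) (n : ℕ) : qInt q (n + 1) = q * qInt q n + 1 := geom_sum_succ

lemma qInt_add (q : S) (m n : ℕ) : qInt q (m + n) = qInt q m + q ^ m * qInt q n := by
  simp only [qInt, sum_range_add, pow_add, mul_sum]

lemma qInt_mul (q : S) (m n : ℕ) : qInt q (m * n) = qInt q m * qInt (q ^ m) n := by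
  induction n with
  | zero => simp [qInt]
  | succ n ih =>
    rw [Nat.mul_succ, add_comm, qInt_add, ih, qInt_succ]
    ring

lemma qFact_succ (q : S) (n : ℕ) : qFact q (n + 1) = qFact q n * qInt q (n + 1) :=
  prod_range_succ _ _

lemma eval_one_qInt_X_pow (p n : ℕ) : (qInt (X ^ p : S[X]) n).eval 1 = n := by
  simp [qInt, eval_finsetSum]

lemma eval_one_qFact_X_pow (p n : ℕ) : (qFact (X ^ p : S[X]) n).eval 1 = n.factorial := by
  simp only [qFact, eval_prod, eval_one_qInt_X_pow]
  exact_mod_cast congrArg (Nat.cast (R := S)) (prod_range_add_one_eq_factorial n)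

lemma qFact_X_pow_ne_zero [CharZero S] (p n : ℕ) : qFact (X ^ p : S[X]) n ≠ 0 := by
  have heval : (qFact (X ^ p : S[X]) n).eval 1 ≠ 0 := by
    simpa only [eval_one_qFact_X_pow] using Nat.cast_ne_zero.2 n.factorial_ne_zero
  exact fun h => heval (by rw [h, eval_zero])

lemma qFact_X_ne_zero [CharZero S] (n : ℕ) : qFact (X : S[X]) n ≠ 0 := by
  simpa using qFact_X_pow_ne_zero (S := S) 1 n

lemma qInt_X_ne_zero [CharZero S] {n : ℕ} (hn : n ≠ 0) : qInt (X : S[X]) n ≠ 0 := by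
  have heval : (qInt (X ^ 1 : S[X]) n).eval 1 ≠ 0 := by
    simpa only [eval_one_qInt_X_pow] using Nat.cast_ne_zero.2 hn
  exact fun h => heval (by rw [pow_one, h, eval_zero])

end QInteger

section QDerivative

variable {S : Type*} [CommRing S]

/-- The `q`-derivative on `S[X]`, which is `f ↦ (f(qX) - f(X)) / ((q - 1)X)` wherever this quotient
makes sense. It is encoded by its values `(k)_q X ^ (k - 1)` on powers so that `q` can be any
element of any commutative ring. -/
noncomputable def qDeriv (q : S) : S[X] →ₗ[S] S[X] :=
  lsum fun k => qInt q k • monomial (k - 1)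

lemma qDeriv_monomial (q : S) (k : ℕ) (a : S) :
    qDeriv q (monomial k a) = monomial (k - 1) (qInt q k * a) := by
  simp [qDeriv, lsum_apply, sum_monomial_index, smul_monomial]

lemma qDeriv_one (q : S) : qDeriv q 1 = 0 := by
  simpa [qInt_zero] using qDeriv_monomial q 0 1

lemma qDeriv_X_mul (q : S) (f : S[X]) : qDeriv q (X * f) = f + q • (X * qDeriv q f) := by
  induction f using Polynomial.induction_on' with
  | add f g hf hg =>
    rw [mul_add, map_add, hf, hg, map_add, mul_add, smul_add]
    abel
  | monomial k a =>
    rw [X_mul_monomial, qDeriv_monomial, qDeriv_monomial, X_mul_monomial, smul_monomial,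
      Nat.add_sub_cancel, qInt_succ]
    rcases k with _ | k
    · simp [qInt_zero]
    · rw [Nat.add_sub_cancel, ← map_add, smul_eq_mul]
      congr 1
      ring

lemma qDeriv_expand (q : S) (p : ℕ) (f : S[X]) :
    qDeriv q (expand S p f) = qInt q p • (X ^ (p - 1) * expand S p (qDeriv (q ^ p) f)) := by
  induction f using Polynomial.induction_on' with
  | add f g hf hg => simp only [map_add, hf, hg, mul_add, smul_add]
  | monomial k a =>
    rw [expand_monomial, qDeriv_monomial, qDeriv_monomial, expand_monomial, X_pow_mul_monomial,
      smul_monomial, mul_comm k p, qInt_mul, mul_assoc, smul_eq_mul]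
    rcases p with _ | p
    · simp [qInt_zero]
    rcases k with _ | k
    · simp [qInt_zero]
    congr 1
    simp only [Nat.add_sub_cancel]
    rw [mul_add_one, mul_comm k, ← Nat.add_assoc, Nat.add_sub_cancel]

/-- The value at `1` of the `m`-th `q`-derivative: `(m)_q!` times the `m`-th coefficient of the
`q`-Taylor expansion at `1`. -/
noncomputable def iterQDerivAtOne (q : S) (m : ℕ) : S[X] →ₗ[S] S :=
  leval 1 ∘ₗ qDeriv q ^ m

lemma iterQDerivAtOne_zero (q : S) (f : S[X]) : iterQDerivAtOne q 0 f = f.eval 1 := rfl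

lemma iterQDerivAtOne_succ (q : S) (m : ℕ) (f : S[X]) :
    iterQDerivAtOne q (m + 1) f = iterQDerivAtOne q m (qDeriv q f) := by
  simp [iterQDerivAtOne, pow_succ]

lemma dvd_iterQDerivAtOne_X_mul {q d : S} {f : S[X]} (h : ∀ m, d ∣ iterQDerivAtOne q m f)
    (m : ℕ) : d ∣ iterQDerivAtOne q m (X * f) := by
  induction m generalizing f with
  | zero => simpa [iterQDerivAtOne_zero] using h 0
  | succ m ih =>
    have hderiv : ∀ k, d ∣ iterQDerivAtOne q k (qDeriv q f) := fun k => by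
      simpa only [iterQDerivAtOne_succ] using h (k + 1)
    rw [iterQDerivAtOne_succ, qDeriv_X_mul, map_add, map_smul, smul_eq_mul]
    exact dvd_add (h m) ((ih hderiv).mul_left q)

lemma dvd_iterQDerivAtOne_X_pow_mul {q d : S} {f : S[X]} (h : ∀ m, d ∣ iterQDerivAtOne q m f)
    (k m : ℕ) : d ∣ iterQDerivAtOne q m (X ^ k * f) := by
  induction k generalizing m with
  | zero => simpa using h m
  | succ k ih => simpa only [pow_succ', mul_assoc] using dvd_iterQDerivAtOne_X_mul ih m

end QDerivative

section MonicSequence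

lemma degree_sub_coeff_smul_lt {S : Type*} [Ring S] {f g : S[X]} {N : ℕ} (hg : g.Monic)
    (hgN : g.natDegree = N) (hf : f.degree < (N + 1 : ℕ)) : (f - f.coeff N • g).degree < N := by
  rw [degree_lt_iff_coeff_zero] at hf ⊢
  intro m hm
  rw [coeff_sub, coeff_smul, smul_eq_mul]
  rcases hm.eq_or_lt with rfl | hlt
  · rw [← hgN, hg.coeff_natDegree, mul_one, sub_self]
  · rw [hf m hlt, coeff_eq_zero_of_natDegree_lt (hgN.trans_lt hlt), mul_zero, sub_zero]

lemma exists_eq_sum_Ico_of_monic_of_dvd {S : Type*} [CommRing S] {b : ℕ → S[X]} {n N : ℕ}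
    (hmonic : ∀ i, (b i).Monic) (hdeg : ∀ i, (b i).natDegree = i)
    (hdvd : ∀ i, n ≤ i → b n ∣ b i) {f : S[X]} (hbf : b n ∣ f) (hf : f.degree < N) :
    ∃ a : ℕ → S, f = ∑ i ∈ Ico n N, a i • b i := by
  nontriviality S
  induction N generalizing f with
  | zero => exact ⟨0, by simpa using hf⟩
  | succ N ih =>
    rcases le_or_gt n N with hn | hn
    · obtain ⟨a, ha⟩ := ih (dvd_sub hbf (dvd_smul_of_dvd (f.coeff N) (hdvd N hn)))
        (degree_sub_coeff_smul_lt (hmonic N) (hdeg N) hf)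
      refine ⟨Function.update a N (f.coeff N), ?_⟩
      rw [sum_Ico_succ_top hn, Function.update_self, ← sub_eq_iff_eq_add, ha]
      refine sum_congr rfl fun i hi => ?_
      rw [Function.update_of_ne (mem_Ico.1 hi).2.ne]
    · have hlt : f.degree < (b n).degree := by
        rw [degree_eq_natDegree (hmonic n).ne_zero, hdeg]
        exact hf.trans_le (by exact_mod_cast hn)
      have hzero : f = 0 := by_contra fun hne => (hmonic n).not_dvd_of_degree_lt hne hlt hbf
      exact ⟨0, by simpa using hzero⟩

end MonicSequence

section TwistedPower

variable {S : Type*} [CommRing S]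

/-- The `n`-th twisted power `∏_{j<n} (X - q^j)`, the `q`-analogue of `(X - 1) ^ n`. -/
noncomputable def twistedPow (q : S) (n : ℕ) : S[X] :=
  ∏ j ∈ range n, (X - C (q ^ j))

lemma twistedPow_zero (q : S) : twistedPow q 0 = 1 := rfl

lemma twistedPow_succ (q : S) (n : ℕ) :
    twistedPow q (n + 1) = (X - C (q ^ n)) * twistedPow q n :=
  prod_range_succ_comm _ _

lemma twistedPow_monic (q : S) (n : ℕ) : (twistedPow q n).Monic :=
  monic_prod_X_sub_C _ _

lemma natDegree_twistedPow [Nontrivial S] (q : S) (n : ℕ) : (twistedPow q n).natDegree = n := by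
  rw [twistedPow, natDegree_prod_of_monic _ _ fun _ _ => monic_X_sub_C _]
  simp only [natDegree_X_sub_C, sum_const, card_range, smul_eq_mul, mul_one]

lemma twistedPow_dvd_twistedPow (q : S) {m n : ℕ} (h : m ≤ n) :
    twistedPow q m ∣ twistedPow q n :=
  prod_dvd_prod_of_subset _ _ _ (range_subset_range.2 h)

lemma expand_twistedPow (q : S) (p n : ℕ) :
    expand S p (twistedPow (q ^ p) n) = ∏ j ∈ range n, (X ^ p - C (q ^ (p * j))) := by
  simp only [twistedPow, map_prod, map_sub, expand_X, expand_C, pow_mul]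

lemma twistedPow_dvd_expand (q : S) (p n : ℕ) :
    twistedPow q n ∣ expand S p (twistedPow (q ^ p) n) := by
  rw [twistedPow, expand_twistedPow]
  refine prod_dvd_prod_of_dvd _ _ fun j _ => ?_
  simpa [← pow_mul, mul_comm] using sub_dvd_pow_sub_pow X (C (q ^ j)) p

lemma eval_one_twistedPow_succ (q : S) (n : ℕ) : (twistedPow q (n + 1)).eval 1 = 0 := by
  simp [twistedPow, prod_range_succ']

lemma qDeriv_twistedPow_succ (q : S) (n : ℕ) :
    qDeriv q (twistedPow q (n + 1)) = qInt q (n + 1) • twistedPow q n := by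
  have leibniz (n : ℕ) : qDeriv q (twistedPow q (n + 1)) =
      twistedPow q n + (q • X - C (q ^ n)) * qDeriv q (twistedPow q n) := by
    rw [twistedPow_succ, sub_mul, map_sub, qDeriv_X_mul, ← smul_eq_C_mul, map_smul, sub_mul,
      smul_mul_assoc, smul_eq_C_mul (q ^ n), add_sub_assoc]
  induction n with
  | zero => simp [leibniz, twistedPow_zero, qDeriv_one, qInt]
  | succ n ih =>
    rw [leibniz, ih, qInt_succ q (n + 1), twistedPow_succ q n]
    simp only [smul_eq_C_mul, map_add, map_mul, map_pow, map_one]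
    ring

lemma iterQDerivAtOne_twistedPow (q : S) (m i : ℕ) :
    iterQDerivAtOne q m (twistedPow q i) = if m = i then qFact q m else 0 := by
  induction m generalizing i with
  | zero =>
    rcases i with _ | i
    · simp [iterQDerivAtOne_zero, twistedPow_zero, qFact]
    · simp [iterQDerivAtOne_zero, eval_one_twistedPow_succ]
  | succ m ih =>
    rcases i with _ | i
    · simp [iterQDerivAtOne_succ, twistedPow_zero, qDeriv_one]
    · rw [iterQDerivAtOne_succ, qDeriv_twistedPow_succ, map_smul, ih]
      by_cases h : m = i
      · simp [h, qFact_succ, mul_comm]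
      · simp [h]

lemma iterQDerivAtOne_sum_twistedPow (q : S) {s : Finset ℕ} (a : ℕ → S) {m : ℕ} (hm : m ∈ s) :
    iterQDerivAtOne q m (∑ i ∈ s, a i • twistedPow q i) = qFact q m * a m := by
  simp [iterQDerivAtOne_twistedPow, hm, mul_comm]

lemma qFact_mul_qInt_pow_dvd_iterQDerivAtOne (q : S) (p n m : ℕ) :
    qFact (q ^ p) n * qInt q p ^ n ∣
      iterQDerivAtOne q m (expand S p (twistedPow (q ^ p) n)) := by
  induction n generalizing m with
  | zero => simp [qFact]
  | succ n ih =>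
    rcases m with _ | m
    · simp [iterQDerivAtOne_zero, expand_eval, eval_one_twistedPow_succ]
    · have hderiv : iterQDerivAtOne q (m + 1) (expand S p (twistedPow (q ^ p) (n + 1))) =
          qInt q p * qInt (q ^ p) (n + 1) *
            iterQDerivAtOne q m (X ^ (p - 1) * expand S p (twistedPow (q ^ p) n)) := by
        simp only [iterQDerivAtOne_succ, qDeriv_expand, qDeriv_twistedPow_succ, map_smul,
          mul_smul_comm, smul_eq_mul, mul_assoc]
      have hdenom : qFact (q ^ p) (n + 1) * qInt q p ^ (n + 1) =
          qInt q p * qInt (q ^ p) (n + 1) * (qFact (q ^ p) n * qInt q p ^ n) := by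
        rw [qFact_succ]
        ring
      rw [hderiv, hdenom]
      exact mul_dvd_mul_left _ (dvd_iterQDerivAtOne_X_pow_mul ih (p - 1) m)

lemma exists_expand_twistedPow_eq_sum (q : S) (p n : ℕ) : ∃ a : ℕ → S,
    expand S p (twistedPow (q ^ p) n) = ∑ i ∈ Icc n (p * n), a i • twistedPow q i := by
  nontriviality S
  refine exists_eq_sum_Ico_of_monic_of_dvd (N := p * n + 1) (twistedPow_monic q)
    (natDegree_twistedPow q) (fun i => twistedPow_dvd_twistedPow q) (twistedPow_dvd_expand q p n)
    (degree_le_natDegree.trans_lt ?_)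
  rw [natDegree_expand, natDegree_twistedPow, mul_comm]
  exact_mod_cast Nat.lt_succ_self _

end TwistedPower

section Homogenization

variable {S : Type*} [CommRing S]

lemma homogenize_prod_X_pow_sub_C (c : ℕ → S) (k m : ℕ) :
    (∏ j ∈ range m, (X ^ k - C (c j))).homogenize (k * m) =
      ∏ j ∈ range m, (MvPolynomial.X 0 ^ k - MvPolynomial.C (c j) * MvPolynomial.X 1 ^ k) := by
  have hdeg : ∀ j ∈ range m, (X ^ k - C (c j)).natDegree ≤ k := fun j _ =>
    (natDegree_sub_C (a := c j)).trans_le (natDegree_X_pow_le k)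
  have hprod := homogenize_finsetProd hdeg
  simpa [mul_comm] using hprod

lemma homogenize_twistedPow (q : S) {i N : ℕ} (h : i ≤ N) :
    (twistedPow q i).homogenize N = MvPolynomial.X 1 ^ (N - i) *
      ∏ j ∈ range i, (MvPolynomial.X 0 - MvPolynomial.C (q ^ j) * MvPolynomial.X 1) := by
  have hdeg : (twistedPow q i).natDegree ≤ i := by
    nontriviality S
    exact (natDegree_twistedPow q i).le
  have hpad := homogenize_mul (twistedPow q i) 1 hdeg (natDegree_one.trans_le (Nat.zero_le (N - i)))
  have hprod := homogenize_prod_X_pow_sub_C (q ^ ·) 1 i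
  simp only [pow_one, one_mul] at hprod
  rw [← hprod, mul_comm]
  simpa [Nat.add_sub_cancel' h, twistedPow] using hpad

lemma homogenize_sum_twistedPow (q : S) (a : ℕ → S) (n N : ℕ) :
    (∑ i ∈ Icc n N, a i • twistedPow q i).homogenize N =
      ∑ i ∈ Icc n N, MvPolynomial.C (a i) * MvPolynomial.X 1 ^ (N - i) *
        ∏ j ∈ range i, (MvPolynomial.X 0 - MvPolynomial.C (q ^ j) * MvPolynomial.X 1) := by
  rw [homogenize_finsetSum]
  refine sum_congr rfl fun i hi => ?_
  rw [homogenize_smul, homogenize_twistedPow q (mem_Icc.1 hi).2, MvPolynomial.smul_eq_C_mul,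
    mul_assoc]

lemma aeval_C_X (f : S[X]) : aeval (C X : S[X][X]) f = C f :=
  (aeval_algebraMap_apply S[X][X] X f).trans (congrArg C (aeval_X_left_apply f))

lemma isAtilde_iff {p n : ℕ} {a : ℕ → ℤ[X]} :
    IsAtilde p n a ↔ (∀ i ∉ Icc n (p * n), a i = 0) ∧
      expand ℤ[X] p (twistedPow (X ^ p) n) = ∑ i ∈ Icc n (p * n), a i • twistedPow X i := by
  refine and_congr_right fun _ => ⟨fun h => ?_, fun h => ?_⟩
  · let setXOne : MvPolynomial (Fin 3) ℤ →ₐ[ℤ] ℤ[X][X] := MvPolynomial.aeval ![C X, 1, X]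
    have hcoeff (b : ℤ[X]) : setXOne (aeval (MvPolynomial.X 0) b) = C b := by
      rw [← aeval_algHom_apply, MvPolynomial.aeval_X]
      exact aeval_C_X b
    rw [expand_twistedPow]
    simpa [hcoeff, twistedPow, smul_eq_C_mul, setXOne] using congrArg setXOne h
  · let toXZ : MvPolynomial (Fin 2) ℤ[X] →+* MvPolynomial (Fin 3) ℤ :=
      MvPolynomial.eval₂Hom (aeval (MvPolynomial.X 0) : ℤ[X] →ₐ[ℤ] _).toRingHom
        ![MvPolynomial.X 2, MvPolynomial.X 1]
    have hhom := congrArg (fun f => toXZ (f.homogenize (p * n))) h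
    simp only [expand_twistedPow, homogenize_prod_X_pow_sub_C, homogenize_sum_twistedPow] at hhom
    simpa [toXZ] using hhom

end Homogenization

lemma IsAtilde.iterQDerivAtOne_eq {p n : ℕ} {a : ℕ → ℤ[X]} (ha : IsAtilde p n a) {i : ℕ}
    (hi : i ∈ Icc n (p * n)) :
    iterQDerivAtOne X i (expand ℤ[X] p (twistedPow (X ^ p) n)) = qFact X i * a i := by
  rw [(isAtilde_iff.1 ha).2, iterQDerivAtOne_sum_twistedPow X a hi]

lemma IsAtilde.unique {p n : ℕ} {a b : ℕ → ℤ[X]} (ha : IsAtilde p n a) (hb : IsAtilde p n b) :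
    a = b := by
  funext i
  by_cases hi : i ∈ Icc n (p * n)
  · exact mul_left_cancel₀ (qFact_X_ne_zero i)
      ((ha.iterQDerivAtOne_eq hi).symm.trans (hb.iterQDerivAtOne_eq hi))
  · rw [ha.1 i hi, hb.1 i hi]

lemma exists_isAtilde (p n : ℕ) : ∃ a, IsAtilde p n a := by
  obtain ⟨a, ha⟩ := exists_expand_twistedPow_eq_sum (X : ℤ[X]) p n
  refine ⟨fun i => if i ∈ Icc n (p * n) then a i else 0,
    isAtilde_iff.2 ⟨fun i hi => if_neg hi, ha.trans (sum_congr rfl fun i hi => ?_)⟩⟩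
  rw [if_pos hi]

theorem divided_frobenius_coefficients_general (p n : ℕ) :
    (∃! a : ℕ → ℤ[X], IsAtilde p n a) ∧
      ∀ a : ℕ → ℤ[X], IsAtilde p n a → ∀ i ∈ Icc n (p * n),
        ∃! b : ℤ[X], qFact ((X : ℤ[X]) ^ p) n * qInt (X : ℤ[X]) p ^ n * b =
          qFact (X : ℤ[X]) i * a i := by
  obtain ⟨a, ha⟩ := exists_isAtilde p n
  refine ⟨⟨a, ha, fun b hb => hb.unique ha⟩, fun a ha i hi => ?_⟩
  obtain ⟨b, hb⟩ := qFact_mul_qInt_pow_dvd_iterQDerivAtOne (X : ℤ[X]) p n i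
  rw [ha.iterQDerivAtOne_eq hi] at hb
  have hdenom : qFact ((X : ℤ[X]) ^ p) n * qInt (X : ℤ[X]) p ^ n ≠ 0 := by
    refine mul_ne_zero (qFact_X_pow_ne_zero p n) ?_
    rcases n.eq_zero_or_pos with rfl | hn
    · simp
    · have hp : p ≠ 0 := by
        rintro rfl
        rw [zero_mul, mem_Icc] at hi
        omega
      exact pow_ne_zero n (qInt_X_ne_zero hp)
  exact ⟨b, hb.symm, fun b' hb' => mul_left_cancel₀ hdenom (hb'.trans hb)⟩

/-- integrality of the coefficients of the divided Frobenius: let `p` be a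
prime. (a) For every `n ≥ 1` there exist unique polynomials `Ã_{n,i}(u) ∈ ℤ[u]`,
`n ≤ i ≤ pn`, with `∏_{j=0}^{n−1} (z^p − u^{pj}·x^p)
 = Σ_{i=n}^{pn} Ã_{n,i}(u)·x^{pn−i}·∏_{j=0}^{i−1} (z − u^j·x)` in `ℤ[u][x,z]`.
(b) For all `n ≥ 1` and `n ≤ i ≤ pn`, `(n)_{u^p}!·((p)_u)^n` divides `(i)_u!·Ã_{n,i}(u)`
in `ℤ[u]`, i.e. there is a unique `B_{n,i}(u) ∈ ℤ[u]` with
`(n)_{u^p}!·((p)_u)^n·B_{n,i}(u) = (i)_u!·Ã_{n,i}(u)`. -/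
theorem divided_frobenius_coefficients (p : ℕ) (hp : p.Prime) :
    ∀ n : ℕ, 1 ≤ n →
      (∃! At : ℕ → Polynomial ℤ, IsAtilde p n At) ∧
      (∀ At : ℕ → Polynomial ℤ, IsAtilde p n At → ∀ i ∈ Finset.Icc n (p * n),
        ∃! B : Polynomial ℤ,
          qFact ((Polynomial.X : Polynomial ℤ) ^ p) n *
              (qInt (Polynomial.X : Polynomial ℤ) p) ^ n * B =
            qFact (Polynomial.X : Polynomial ℤ) i * At i) :=
  fun n _ => divided_frobenius_coefficients_general p n
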